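/- Differentiation under the integral sign for the E-potential: Let T > 0, let φ : (0,T] → ℝ be such that t ↦ t^{1−α_m} φ(t) extends to a continuous function on [0,T], and let s : [0,T] → ℝ satisfy |s(t) − s(τ)| ≤ |t − τ|^β for all t, τ ∈ [0,T], for some β > α_m/2. Then for all t ∈ (0,T] and all x ∈ ℝ with x ≠ s(t), the function x ↦ ∫₀^t φ(τ) E(x − s(τ), t − τ) dτ is differentiable at x and (∂/∂x) ∫₀^t φ(τ) E(x − s(τ), t − τ) dτ = ∫₀^t φ(τ) E_x(x − s(τ), t − τ) dτ. -/

import Mathlib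

open MeasureTheory Real Filter Set Topology intervalIntegral

/-- The Wright function `W(z; -β, δ) = ∑ z^k/(k! Γ(δ - βk))`, with `1/Γ` the
entire reciprocal Gamma function (here `Real.Gamma` vanishes at nonpositive
integers, so division gives the correct value `0`). -/
noncomputable def wrightW (β δ z : ℝ) : ℝ :=
  ∑' k : ℕ, z ^ k / (k.factorial * Real.Gamma (δ - β * k))

/-- Laplace convolution on `(0, ∞)`. -/
noncomputable def laplaceConv (f g : ℝ → ℝ) : ℝ → ℝ :=
  fun t => ∫ τ in (0:ℝ)..t, f τ * g (t - τ)

/-- Iterated Laplace convolution `h₀ ∗ h₁ ∗ ⋯ ∗ hₙ`. -/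
noncomputable def iterConv : (n : ℕ) → (Fin (n + 1) → ℝ → ℝ) → ℝ → ℝ
  | 0, h => h 0
  | n + 1, h => laplaceConv (iterConv n (fun i => h i.castSucc)) (h (Fin.last (n + 1)))

/-- `S^μ_m(t; -ℓ₁, …, -ℓ_m; -α₁, …, -α_m)` with the decomposition `μ₁ = μ`,
`μ_j = 0` for `j ≥ 2`: the Laplace convolution of
`h_j(t) = t^{μ_j - 1} W(-ℓ_j t^{-α_j}; -α_j, μ_j)`.  Indices run over
`Fin (n+1)`, i.e. the number of terms is `m = n + 1 ≥ 1`. -/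
noncomputable def Sconv (n : ℕ) (μ : ℝ) (α ℓ : Fin (n + 1) → ℝ) : ℝ → ℝ :=
  iterConv n (fun j t =>
    t ^ ((if j = 0 then μ else 0) - 1) *
      wrightW (α j) (if j = 0 then μ else 0) (-(ℓ j) * t ^ (-(α j))))

/-- `Γ^μ₁(x,t)`. -/
noncomputable def Gam1 (n : ℕ) (α lam : Fin (n + 1) → ℝ) (μ x t : ℝ) : ℝ :=
  (4 * Real.pi) ^ (-(1/2 : ℝ)) *
    ∫ p in Set.Ioi (0:ℝ),
      p ^ (-(1/2 : ℝ)) * Real.exp (-(|x| ^ 2) / (4 * p)) *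
        Sconv n μ α (fun j => lam j * p) t

/-- The kernel `E(x,t) = Γ⁰₁(x,t)`. -/
noncomputable def kerE (n : ℕ) (α lam : Fin (n + 1) → ℝ) (x t : ℝ) : ℝ :=
  Gam1 n α lam 0 x t

/-- `E_x`, the spatial derivative of `E`. -/
noncomputable def kerEx (n : ℕ) (α lam : Fin (n + 1) → ℝ) (x t : ℝ) : ℝ :=
  deriv (fun y => kerE n α lam y t) x

/-- `E_xx`, the second spatial derivative of `E`. -/
noncomputable def kerExx (n : ℕ) (α lam : Fin (n + 1) → ℝ) (x t : ℝ) : ℝ :=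
  deriv (fun y => kerEx n α lam y t) x

/-- The kernel `Z(x,t) = ∑ₖ λₖ Γ^{1-αₖ}₁(x,t)`. -/
noncomputable def kerZ (n : ℕ) (α lam : Fin (n + 1) → ℝ) (x t : ℝ) : ℝ :=
  ∑ k : Fin (n + 1), lam k * Gam1 n α lam (1 - α k) x t

/-- `Z_x`, the spatial derivative of `Z`. -/
noncomputable def kerZx (n : ℕ) (α lam : Fin (n + 1) → ℝ) (x t : ℝ) : ℝ :=
  deriv (fun y => kerZ n α lam y t) x

/-- `Z_xx`, the second spatial derivative of `Z`. -/
noncomputable def kerZxx (n : ℕ) (α lam : Fin (n + 1) → ℝ) (x t : ℝ) : ℝ :=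
  deriv (fun y => kerZx n α lam y t) x

theorem integrableOn_rpow_mul_exp_neg_mul {s b : ℝ} (hs : -1 < s) (hb : 0 < b) :
    IntegrableOn (fun u : ℝ => u ^ s * Real.exp (-(b * u))) (Ioi 0) := by
  simpa using integrableOn_rpow_mul_exp_neg_mul_rpow (p := 1) hs one_pos hb

theorem norm_ofReal_mul_cexp {r : ℝ} (hr : 0 ≤ r) (c : ℂ) (u : ℝ) :
    ‖(r : ℂ) * Complex.exp (-(c * u))‖ = r * Real.exp (-(c.re * u)) := by
  rw [norm_mul, Complex.norm_exp, Complex.norm_real, Real.norm_of_nonneg hr]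
  simp

theorem integrableOn_rpow_mul_cexp {s : ℝ} (hs : -1 < s) {c : ℂ} (hc : 0 < c.re) :
    IntegrableOn (fun u : ℝ => ((u ^ s : ℝ) : ℂ) * Complex.exp (-(c * u))) (Ioi 0) := by
  refine (integrableOn_rpow_mul_exp_neg_mul hs hc).mono' (by fun_prop) ?_
  filter_upwards [ae_restrict_mem measurableSet_Ioi] with u hu
  rw [norm_ofReal_mul_cexp (rpow_nonneg (le_of_lt hu) _)]

/-- The Laplace transform of a power, on the open right half-plane. -/
theorem integral_rpow_mul_cexp {s : ℝ} (hs : 0 < s) {c : ℂ} (hc : 0 < c.re) :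
    ∫ u in Ioi (0 : ℝ), ((u ^ (s - 1) : ℝ) : ℂ) * Complex.exp (-(c * u)) =
      Real.Gamma s * c ^ (-(s : ℂ)) := by
  have hopen : IsOpen {z : ℂ | 0 < z.re} := isOpen_lt continuous_const Complex.continuous_re
  have hconn : IsPreconnected {z : ℂ | 0 < z.re} :=
    (convex_halfSpace_re_gt 0).isPreconnected
  have hl : AnalyticOnNhd ℂ (fun c : ℂ =>
      ∫ u in Ioi (0 : ℝ), ((u ^ (s - 1) : ℝ) : ℂ) * Complex.exp (-(c * u))) {z : ℂ | 0 < z.re} := by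
    refine DifferentiableOn.analyticOnNhd (fun z hz => ?_) hopen
    have hz0 : 0 < z.re := hz
    have key := hasDerivAt_integral_of_dominated_loc_of_deriv_le (𝕜 := ℂ) (x₀ := z)
      (s := {w : ℂ | z.re / 2 < w.re}) (μ := volume.restrict (Ioi (0 : ℝ)))
      (F := fun w u => ((u ^ (s - 1) : ℝ) : ℂ) * Complex.exp (-(w * u)))
      (F' := fun w u => ((u ^ (s - 1) : ℝ) : ℂ) * (Complex.exp (-(w * u)) * (-u)))
      (bound := fun u => u ^ s * Real.exp (-(z.re / 2 * u)))
      ((isOpen_lt continuous_const Complex.continuous_re).mem_nhds (by simp; linarith))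
      (Eventually.of_forall fun w => by fun_prop)
      (integrableOn_rpow_mul_cexp (by linarith) hz0) (by fun_prop) ?_
      (integrableOn_rpow_mul_exp_neg_mul (by linarith) (by linarith)) ?_
    · exact key.2.differentiableAt.differentiableWithinAt
    · filter_upwards [ae_restrict_mem measurableSet_Ioi] with u hu w hw
      have hu : 0 < u := hu
      have hw : z.re / 2 < w.re := hw
      rw [← mul_assoc, norm_mul, norm_ofReal_mul_cexp (rpow_nonneg hu.le _), norm_neg,
        Complex.norm_real, Real.norm_of_nonneg hu.le, mul_right_comm]
      rw [← rpow_add_one hu.ne', sub_add_cancel]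
      gcongr
    · refine Eventually.of_forall fun u w _ => ?_
      refine HasDerivAt.const_mul _ ?_
      have h : HasDerivAt (fun w : ℂ => -(w * u)) (-(1 * (u : ℂ))) w :=
        ((hasDerivAt_id w).mul_const _).neg
      simpa using h.cexp
  have hr : AnalyticOnNhd ℂ (fun c : ℂ => (Real.Gamma s : ℂ) * c ^ (-(s : ℂ)))
      {z : ℂ | 0 < z.re} := by
    refine DifferentiableOn.analyticOnNhd (fun z hz => ?_) hopen
    refine DifferentiableAt.differentiableWithinAt ?_
    refine (DifferentiableAt.cpow differentiableAt_id (differentiableAt_const _)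
      (Or.inl hz)).const_mul _
  have hreal : ∀ r : ℝ, 0 < r →
      ∫ u in Ioi (0 : ℝ), ((u ^ (s - 1) : ℝ) : ℂ) * Complex.exp (-((r : ℂ) * u)) =
        Real.Gamma s * (r : ℂ) ^ (-(s : ℂ)) := by
    intro r hr
    have h := Real.integral_rpow_mul_exp_neg_mul_Ioi hs hr
    have h2 : ∫ u in Ioi (0 : ℝ), ((u ^ (s - 1) : ℝ) : ℂ) * Complex.exp (-((r : ℂ) * u)) =
        ((∫ u in Ioi (0 : ℝ), u ^ (s - 1) * Real.exp (-(r * u)) : ℝ) : ℂ) := by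
      rw [← integral_complex_ofReal]
      congr 1
      ext u
      push_cast
      rfl
    rw [h2, h, ← Complex.ofReal_neg, ← Complex.ofReal_cpow hr.le, ← Complex.ofReal_mul, one_div,
      Real.inv_rpow hr.le, Real.rpow_neg hr.le, mul_comm]
  refine hl.eqOn_of_preconnected_of_frequently_eq hr hconn (z₀ := 1) (by simp) ?_ hc
  have ht : Tendsto (fun r : ℝ => (r : ℂ)) (𝓝[>] 1) (𝓝[≠] 1) := by
    refine tendsto_nhdsWithin_iff.2 ⟨?_, ?_⟩
    · exact (Complex.continuous_ofReal.tendsto' 1 1 (by simp)).mono_left nhdsWithin_le_nhds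
    · filter_upwards [self_mem_nhdsWithin] with r hr
      have hr : 1 < r := hr
      simpa using hr.ne'
  refine ht.frequently (Eventually.frequently ?_)
  filter_upwards [self_mem_nhdsWithin] with r hr
  exact hreal r (lt_trans one_pos hr)

theorem integrableOn_exp_neg_mul_add_rpow {α κ : ℝ} (hα : α ∈ Ioo (0 : ℝ) 1) (hκ : 0 < κ) (z : ℝ) :
    IntegrableOn (fun u : ℝ => Real.exp (-(κ * u)) * Real.exp (z * u ^ α)) (Ioi 0) := by
  refine integrable_of_isBigO_exp_neg (b := κ / 2) (by linarith) ?_ ?_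
  · have : Continuous fun u : ℝ => u ^ α := continuous_id.rpow_const fun _ => Or.inr hα.1.le
    fun_prop
  · refine Asymptotics.IsBigO.of_bound 1 ?_
    have hlim : Tendsto (fun u : ℝ => |z| * u ^ (-(1 - α))) atTop (𝓝 (|z| * 0)) :=
      (tendsto_rpow_neg_atTop (by linarith [hα.2])).const_mul _
    rw [mul_zero] at hlim
    filter_upwards [hlim.eventually_lt_const (show 0 < κ / 2 by linarith), eventually_gt_atTop 0]
      with u hu hu0
    rw [← Real.exp_add, one_mul, Real.norm_of_nonneg (Real.exp_pos _).le,
      Real.norm_of_nonneg (Real.exp_pos _).le]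
    gcongr
    have h1 : u ^ α = u ^ (-(1 - α)) * u := by
      rw [← rpow_add_one hu0.ne']; ring_nf
    have h2 : z * u ^ α ≤ |z| * u ^ α := by gcongr; exact le_abs_self z
    have h3 : |z| * u ^ (-(1 - α)) * u ≤ κ / 2 * u := by gcongr
    rw [h1] at h2 ⊢
    linarith

theorem inv_Gamma_neg (x : ℝ) (hx : 0 ≤ x) :
    (Real.Gamma (-x))⁻¹ = -(1 / π) * (Real.Gamma (x + 1) * Real.sin (π * x)) := by
  have hG : Real.Gamma (x + 1) ≠ 0 := (Real.Gamma_pos_of_pos (by linarith)).ne'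
  have h := congrArg Inv.inv (Real.Gamma_mul_Gamma_one_sub (-x))
  rw [sub_neg_eq_add, add_comm, mul_neg, Real.sin_neg, mul_inv, inv_div] at h
  field_simp at h ⊢
  linear_combination h

theorem hasSum_wright {α θ : ℝ} (hα : α ∈ Ioo (0 : ℝ) 1) (hθ : θ = α * (π - θ))
    (hc : 0 < Real.cos θ) (hθ0 : 0 < θ) (hθπ : θ < π) (z : ℝ) :
    HasSum (fun k : ℕ => z ^ k / (k.factorial * Real.Gamma (0 - α * k)))
      (-(1 / π) * (Complex.exp (-(θ * Complex.I)) * ∫ u in Ioi (0 : ℝ),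
        Complex.exp (-(Complex.exp (-(θ * Complex.I)) * u)) *
          Complex.exp (z * Complex.exp (θ * Complex.I) * (u ^ α : ℝ))).im) := by
  set c : ℂ := Complex.exp (-(θ * Complex.I)) with hcdef
  set a : ℂ := Complex.exp (θ * Complex.I) with hadef
  have hcre : c.re = Real.cos θ := by
    rw [hcdef, ← neg_mul, ← Complex.ofReal_neg, Complex.exp_ofReal_mul_I_re, Real.cos_neg]
  have hanorm : ‖a‖ = 1 := Complex.norm_exp_ofReal_mul_I θ
  have hcpos : 0 < c.re := hcre ▸ hc
  have hsum := MeasureTheory.hasSum_integral_of_dominated_convergence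
    (μ := volume.restrict (Ioi (0 : ℝ)))
    (F := fun (k : ℕ) u => Complex.exp (-(c * u)) *
      ((z * a * (u ^ α : ℝ)) ^ k / (k.factorial : ℂ)))
    (f := fun u => Complex.exp (-(c * u)) * Complex.exp (z * a * (u ^ α : ℝ)))
    (fun k u => Real.exp (-(c.re * u)) * ((|z| * u ^ α) ^ k / (k.factorial : ℝ)))
    (fun k => by fun_prop) ?_ ?_ ?_ ?_
  rotate_left
  · intro k
    filter_upwards [ae_restrict_mem measurableSet_Ioi] with u hu
    have hu : 0 < u := hu
    rw [norm_mul, Complex.norm_exp, norm_div, norm_pow, norm_mul, norm_mul, hanorm,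
      Complex.norm_real, Complex.norm_real, Complex.norm_natCast,
      Real.norm_of_nonneg (rpow_nonneg hu.le _)]
    simp
  · exact Eventually.of_forall fun u => (Real.summable_pow_div_factorial _).mul_left _
  · have := integrableOn_exp_neg_mul_add_rpow hα hcpos |z|
    refine this.congr (Eventually.of_forall fun u => ?_)
    simp only [tsum_mul_left]
    rw [Real.exp_eq_exp_ℝ, NormedSpace.exp_eq_tsum_div]
  · refine Eventually.of_forall fun u => HasSum.mul_left _ ?_
    rw [Complex.exp_eq_exp_ℂ]
    exact NormedSpace.expSeries_div_hasSum_exp _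
  have h2 := (Complex.hasSum_im (hsum.mul_left c)).mul_left (-(1 / π))
  refine h2.congr_fun fun k => ?_
  have hk : (0 : ℝ) ≤ α * k := mul_nonneg hα.1.le k.cast_nonneg
  have hint : ∫ u in Ioi (0 : ℝ), Complex.exp (-(c * u)) *
      ((z * a * (u ^ α : ℝ)) ^ k / (k.factorial : ℂ)) =
      (z * a) ^ k / (k.factorial : ℂ) * (Real.Gamma (α * k + 1) * c ^ (-((α * k + 1 : ℝ) : ℂ))) := by
    rw [← integral_rpow_mul_cexp (by linarith) hcpos, ← MeasureTheory.integral_const_mul]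
    refine setIntegral_congr_fun measurableSet_Ioi fun u hu => ?_
    have hu : 0 < u := hu
    simp only [add_sub_cancel_right]
    rw [rpow_mul hu.le, rpow_natCast]
    push_cast
    ring
  have hcpow : c * (a ^ k * c ^ (-((α * k + 1 : ℝ) : ℂ))) =
      Complex.exp ((π * (α * k) : ℝ) * Complex.I) := by
    have hlog : Complex.log c = -(θ * Complex.I) := by
      rw [hcdef, Complex.log_exp] <;> simp <;> linarith
    rw [Complex.cpow_def_of_ne_zero (Complex.exp_ne_zero _), hlog, hadef, ← Complex.exp_nat_mul,
      hcdef, ← Complex.exp_add, ← Complex.exp_add]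
    congr 1
    have h3 : (θ : ℂ) = α * (π - θ) := by exact_mod_cast hθ
    push_cast
    linear_combination (k * Complex.I) * h3
  have him : (c * ((z * a) ^ k / (k.factorial : ℂ) *
      (Real.Gamma (α * k + 1) * c ^ (-((α * k + 1 : ℝ) : ℂ))))).im =
      z ^ k / k.factorial * Real.Gamma (α * k + 1) * Real.sin (π * (α * k)) := by
    have : c * ((z * a) ^ k / (k.factorial : ℂ) *
        (Real.Gamma (α * k + 1) * c ^ (-((α * k + 1 : ℝ) : ℂ)))) =
        ((z ^ k / k.factorial * Real.Gamma (α * k + 1) : ℝ) : ℂ) *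
          Complex.exp ((π * (α * k) : ℝ) * Complex.I) := by
      rw [← hcpow]
      push_cast
      ring
    rw [this, Complex.im_ofReal_mul, Complex.exp_ofReal_mul_I_im]
  rw [hint, him, zero_sub, ← div_div, div_eq_mul_inv _ (Real.Gamma _), inv_Gamma_neg _ hk]
  ring

theorem exists_wright_bound {α : ℝ} (hα : α ∈ Ioo (0 : ℝ) 1) :
    (∀ z : ℝ, Summable fun k : ℕ => z ^ k / (k.factorial * Real.Gamma (0 - α * k))) ∧
    ∃ C : ℝ, 0 ≤ C ∧ ∀ z : ℝ, 0 < z → |wrightW α 0 (-z)| ≤ C * z ∧ |wrightW α 0 (-z)| ≤ C * z⁻¹ := by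
  obtain ⟨θ, hθ, hc, hθ0, hθπ⟩ : ∃ θ : ℝ, θ = α * (π - θ) ∧ 0 < Real.cos θ ∧ 0 < θ ∧ θ < π := by
    have h1 : 0 < 1 + α := by linarith [hα.1]
    have h2 : π * α / (1 + α) < π / 2 := by
      rw [div_lt_div_iff₀ h1 two_pos]
      nlinarith [Real.pi_pos, hα.2]
    have h3 : 0 < π * α / (1 + α) := div_pos (mul_pos Real.pi_pos hα.1) h1
    refine ⟨π * α / (1 + α), by field_simp; ring, Real.cos_pos_of_mem_Ioo ⟨?_, h2⟩, h3, ?_⟩ <;>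
      linarith [Real.pi_pos]
  have hs := hasSum_wright hα hθ hc hθ0 hθπ
  have hint : IntegrableOn (fun u : ℝ => u ^ (-α) * Real.exp (-(Real.cos θ * u))) (Ioi 0) :=
    integrableOn_rpow_mul_exp_neg_mul (by linarith [hα.2]) hc
  have hcre : (Complex.exp (-(θ * Complex.I))).re = Real.cos θ := by
    rw [← neg_mul, ← Complex.ofReal_neg, Complex.exp_ofReal_mul_I_re, Real.cos_neg]
  have hinv : ∀ z : ℝ, 0 < z → |wrightW α 0 (-z)| ≤
      (1 / π * ∫ u in Ioi (0 : ℝ), 1 / Real.cos θ * (u ^ (-α) * Real.exp (-(Real.cos θ * u)))) *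
        z⁻¹ := by
    intro z hz
    rw [wrightW, (hs (-z)).tsum_eq, abs_mul, abs_neg, abs_of_pos (by positivity : 0 < 1 / π),
      mul_assoc]
    gcongr
    refine (Complex.abs_im_le_norm _).trans ?_
    rw [norm_mul, ← neg_mul, ← Complex.ofReal_neg, Complex.norm_exp_ofReal_mul_I, one_mul,
      Complex.ofReal_neg, neg_mul, ← MeasureTheory.integral_mul_const]
    refine norm_integral_le_of_norm_le ((hint.const_mul _).mul_const _) ?_
    filter_upwards [ae_restrict_mem measurableSet_Ioi] with u hu
    have hu : 0 < u := hu
    have hre : (((-z : ℝ) : ℂ) * Complex.exp (θ * Complex.I) * (u ^ α : ℝ)).re =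
        -(z * Real.cos θ * u ^ α) := by
      rw [mul_right_comm, ← Complex.ofReal_mul, Complex.re_ofReal_mul,
        Complex.exp_ofReal_mul_I_re]
      ring
    rw [norm_mul, Complex.norm_exp, Complex.norm_exp, hre, Complex.neg_re, Complex.re_mul_ofReal,
      hcre]
    have hx : 0 < z * Real.cos θ * u ^ α := by positivity
    have hexp : Real.exp (-(z * Real.cos θ * u ^ α)) ≤ (z * Real.cos θ * u ^ α)⁻¹ := by
      rw [Real.exp_neg]
      gcongr
      linarith [Real.add_one_le_exp (z * Real.cos θ * u ^ α)]
    calc _ ≤ Real.exp (-(Real.cos θ * u)) * (z * Real.cos θ * u ^ α)⁻¹ := by gcongr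
      _ = _ := by
        rw [rpow_neg hu.le]
        field_simp
  set D : ℝ := 1 / π * ∫ u in Ioi (0 : ℝ), 1 / Real.cos θ *
    (u ^ (-α) * Real.exp (-(Real.cos θ * u))) with hD
  have hsm := (hs 1).summable.abs
  set B : ℝ := ∑' k : ℕ, |(1 : ℝ) ^ k / (k.factorial * Real.Gamma (0 - α * k))| with hB
  have hB0 : 0 ≤ B := tsum_nonneg fun _ => abs_nonneg _
  have hD0 : 0 ≤ D := by
    have := (abs_nonneg _).trans (hinv 1 one_pos)
    simpa using this
  have hlin : ∀ z : ℝ, 0 < z → z ≤ 1 → |wrightW α 0 (-z)| ≤ B * z := by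
    intro z hz hz1
    have hle : ∀ k : ℕ, ‖(-z) ^ k / (k.factorial * Real.Gamma (0 - α * k))‖ ≤
        |(1 : ℝ) ^ k / (k.factorial * Real.Gamma (0 - α * k))| * z := by
      intro k
      rcases Nat.eq_zero_or_pos k with rfl | hk
      · simp
      · rw [Real.norm_eq_abs, abs_div, abs_div, abs_pow, abs_neg, abs_of_pos hz, one_pow, abs_one,
          div_mul_eq_mul_div, one_mul]
        gcongr
        exact pow_le_of_le_one hz.le hz1 hk.ne'
    exact tsum_of_norm_bounded (hsm.hasSum.mul_right z) hle
  refine ⟨fun z => (hs z).summable, B + D, by positivity, fun z hz => ?_⟩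
  rcases le_total z 1 with h1 | h1
  · have h2 := hlin z hz h1
    have h3 : z ≤ z⁻¹ := h1.trans (one_le_inv_iff₀.2 ⟨hz, h1⟩)
    constructor
    · nlinarith
    · nlinarith
  · have h2 := hinv z hz
    have h3 : z⁻¹ ≤ z := (inv_le_one_of_one_le₀ h1).trans h1
    have h4 : 0 < z⁻¹ := inv_pos.2 hz
    constructor
    · nlinarith
    · nlinarith

theorem measurable_wrightW {α : ℝ} (hα : α ∈ Ioo (0 : ℝ) 1) : Measurable (wrightW α 0) := by
  refine measurable_of_tendsto_metrizable (f := fun n z =>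
    ∑ k ∈ Finset.range n, z ^ k / (k.factorial * Real.Gamma (0 - α * k))) (fun n => by fun_prop) ?_
  exact tendsto_pi_nhds.2 fun z => ((exists_wright_bound hα).1 z).hasSum.tendsto_sum_nat

/-- A jointly measurable family `f p t` that is bounded in `L¹(0, T)` by a multiple of
`min 1 p⁻¹` and, for `t` away from `0`, pointwise by a multiple of `min p p⁻¹`. -/
structure IsDensityFamily (T : ℝ) (f : ℝ → ℝ → ℝ) : Prop where
  meas : Measurable (Function.uncurry f)
  integral_le : ∃ C : ℝ, 0 ≤ C ∧ ∀ p, 0 < p → IntegrableOn (f p) (Ioc 0 T) ∧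
    ∫ t in Ioc 0 T, |f p t| ≤ C * min 1 p⁻¹
  abs_le : ∀ ε, 0 < ε → ∃ C : ℝ, 0 ≤ C ∧ ∀ p, 0 < p → ∀ t ∈ Icc ε T, |f p t| ≤ C * min p p⁻¹

theorem measurable_laplaceConv {f g : ℝ → ℝ → ℝ} (hf : Measurable (Function.uncurry f))
    (hg : Measurable (Function.uncurry g)) :
    Measurable (Function.uncurry fun p => laplaceConv (f p) (g p)) := by
  have hF : Measurable fun q : (ℝ × ℝ) × ℝ => f q.1.1 q.2 * g q.1.1 (q.1.2 - q.2) :=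
    (hf.comp (f := fun q : (ℝ × ℝ) × ℝ => (q.1.1, q.2)) (by fun_prop)).mul
      (hg.comp (f := fun q : (ℝ × ℝ) × ℝ => (q.1.1, q.1.2 - q.2)) (by fun_prop))
  have hA : MeasurableSet {q : (ℝ × ℝ) × ℝ | 0 < q.2 ∧ q.2 ≤ q.1.2} :=
    (measurableSet_lt measurable_const measurable_snd).inter
      (measurableSet_le measurable_snd (by fun_prop))
  have hB : MeasurableSet {q : (ℝ × ℝ) × ℝ | q.1.2 < q.2 ∧ q.2 ≤ 0} :=
    (measurableSet_lt (by fun_prop) measurable_snd).inter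
      (measurableSet_le measurable_snd measurable_const)
  have h1 := ((hF.indicator hA).stronglyMeasurable.integral_prod_right' (ν := volume)).measurable
  have h2 := ((hF.indicator hB).stronglyMeasurable.integral_prod_right' (ν := volume)).measurable
  convert h1.sub h2 using 1
  ext ⟨p, t⟩
  simp only [Function.uncurry, laplaceConv, intervalIntegral, Pi.sub_apply]
  rw [← MeasureTheory.integral_indicator measurableSet_Ioc,
    ← MeasureTheory.integral_indicator measurableSet_Ioc]
  rfl

theorem IsDensityFamily.laplaceConv {T : ℝ} {f g : ℝ → ℝ → ℝ} (hf : IsDensityFamily T f)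
    (hg : IsDensityFamily T g) : IsDensityFamily T fun p => laplaceConv (f p) (g p) := by
  have hmeas := measurable_laplaceConv hf.meas hg.meas
  obtain ⟨Cf, hCf, hfi⟩ := hf.integral_le
  obtain ⟨Cg, hCg, hgi⟩ := hg.integral_le
  have hmin : ∀ p : ℝ, 0 < p → 0 ≤ min 1 p⁻¹ := fun p hp => by positivity
  refine ⟨hmeas, ⟨Cf * Cg, by positivity, fun p hp => ?_⟩, fun ε hε => ?_⟩
  · obtain ⟨hf1, hf2⟩ := hfi p hp
    obtain ⟨hg1, hg2⟩ := hgi p hp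
    have hmp := hmin p hp
    set F : ℝ → ℝ := (Ioc 0 T).indicator fun t => |f p t| with hFdef
    set G : ℝ → ℝ := (Ioc 0 T).indicator fun t => |g p t| with hGdef
    have hF : Integrable F := (integrable_indicator_iff measurableSet_Ioc).2 hf1.abs
    have hG : Integrable G := (integrable_indicator_iff measurableSet_Ioc).2 hg1.abs
    have hIF : ∫ t in Ioi 0, F t = ∫ t in Ioc 0 T, |f p t| := by
      rw [hFdef, setIntegral_indicator measurableSet_Ioc, inter_eq_right.2 Ioc_subset_Ioi_self]
    have hIG : ∫ t in Ioi 0, G t = ∫ t in Ioc 0 T, |g p t| := by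
      rw [hGdef, setIntegral_indicator measurableSet_Ioc, inter_eq_right.2 Ioc_subset_Ioi_self]
    have hconv := integrable_posConvolution hF.integrableOn hG.integrableOn (μ := volume)
      (ν := volume) (ContinuousLinearMap.mul ℝ ℝ)
    have hconvI := integral_posConvolution hF.integrableOn hG.integrableOn (μ := volume)
      (ν := volume) (ContinuousLinearMap.mul ℝ ℝ)
    have hI := (integrable_indicator_iff measurableSet_Ioi).1 hconv
    simp only [ContinuousLinearMap.mul_apply'] at hconvI hI
    have hle : ∀ t ∈ Ioc 0 T, |_root_.laplaceConv (f p) (g p) t| ≤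
        ∫ τ in (0:ℝ)..t, F τ * G (t - τ) := by
      intro t ht
      rw [_root_.laplaceConv]
      refine (intervalIntegral.abs_integral_le_integral_abs ht.1.le).trans (le_of_eq ?_)
      rw [intervalIntegral.integral_of_le ht.1.le, intervalIntegral.integral_of_le ht.1.le,
        integral_Ioc_eq_integral_Ioo, integral_Ioc_eq_integral_Ioo]
      refine setIntegral_congr_fun measurableSet_Ioo fun τ hτ => ?_
      have h1 : τ ∈ Ioc 0 T := ⟨hτ.1, hτ.2.le.trans ht.2⟩
      have h2 : t - τ ∈ Ioc 0 T := ⟨by linarith [hτ.2], by linarith [hτ.1, ht.2]⟩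
      simp only [hFdef, hGdef, indicator_of_mem h1, indicator_of_mem h2, abs_mul]
    have hIT := hI.mono_set (Ioc_subset_Ioi_self : Ioc 0 T ⊆ Ioi 0)
    have hint : IntegrableOn (_root_.laplaceConv (f p) (g p)) (Ioc 0 T) := by
      refine hIT.mono' ?_ ?_
      · exact (hmeas.comp (f := fun t => (p, t)) (by fun_prop)).aestronglyMeasurable
      · filter_upwards [ae_restrict_mem measurableSet_Ioc] with t ht using hle t ht
    refine ⟨hint, ?_⟩
    calc ∫ t in Ioc 0 T, |_root_.laplaceConv (f p) (g p) t|
        ≤ ∫ t in Ioc 0 T, ∫ τ in (0:ℝ)..t, F τ * G (t - τ) :=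
          setIntegral_mono_on hint.abs hIT measurableSet_Ioc hle
      _ ≤ ∫ t in Ioi 0, ∫ τ in (0:ℝ)..t, F τ * G (t - τ) := by
          refine setIntegral_mono_set hI ?_ (LE.le.eventuallyLE Ioc_subset_Ioi_self)
          filter_upwards [ae_restrict_mem measurableSet_Ioi] with t ht
          refine intervalIntegral.integral_nonneg (le_of_lt ht) fun τ _ => mul_nonneg ?_ ?_
          · exact indicator_nonneg (fun _ _ => abs_nonneg _) _
          · exact indicator_nonneg (fun _ _ => abs_nonneg _) _
      _ = (∫ t in Ioc 0 T, |f p t|) * ∫ t in Ioc 0 T, |g p t| := by rw [hconvI, hIF, hIG]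
      _ ≤ (Cf * min 1 p⁻¹) * (Cg * min 1 p⁻¹) := by gcongr
      _ ≤ (Cf * min 1 p⁻¹) * (Cg * 1) := by gcongr; exact min_le_left _ _
      _ = _ := by ring
  · obtain ⟨Bf, hBf, hf3⟩ := hf.abs_le (ε / 2) (by positivity)
    obtain ⟨Bg, hBg, hg3⟩ := hg.abs_le (ε / 2) (by positivity)
    refine ⟨Bf * Cg + Bg * Cf, by positivity, fun p hp t ht => ?_⟩
    obtain ⟨hf1, hf2⟩ := hfi p hp
    obtain ⟨hg1, hg2⟩ := hgi p hp
    have ht0 : 0 < t := hε.trans_le ht.1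
    have hsub : Ioc 0 t ⊆ Ioc 0 T := Ioc_subset_Ioc_right ht.2
    have hft : IntegrableOn (fun τ => |f p τ|) (Ioc 0 t) := IntegrableOn.mono_set hf1.abs hsub
    have hgt : IntegrableOn (fun τ => |g p τ|) (Ioc 0 t) := IntegrableOn.mono_set hg1.abs hsub
    have hgt' : IntegrableOn (fun τ => |g p (t - τ)|) (Ioc 0 t) := by
      have := ((intervalIntegrable_iff_integrableOn_Ioc_of_le ht0.le).2 hgt).comp_sub_left t
      rw [sub_zero, sub_self] at this
      exact (intervalIntegrable_iff_integrableOn_Ioc_of_le ht0.le).1 this.symm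
    have hgI : ∫ τ in Ioc 0 t, |g p (t - τ)| = ∫ τ in Ioc 0 t, |g p τ| := by
      rw [← intervalIntegral.integral_of_le ht0.le, ← intervalIntegral.integral_of_le ht0.le,
        intervalIntegral.integral_comp_sub_left (fun τ => |g p τ|) t, sub_zero, sub_self]
    have hmono : ∀ h : ℝ → ℝ, IntegrableOn (fun τ => |h τ|) (Ioc 0 T) →
        ∫ τ in Ioc 0 t, |h τ| ≤ ∫ τ in Ioc 0 T, |h τ| := fun h hh =>
      setIntegral_mono_set hh (Eventually.of_forall fun _ => abs_nonneg _)
        (LE.le.eventuallyLE hsub)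
    have hm0 : 0 ≤ min p p⁻¹ := by positivity
    have hle1 : min 1 p⁻¹ ≤ 1 := min_le_left _ _
    have hpt : ∀ τ ∈ Ioc 0 t, ‖f p τ * g p (t - τ)‖ ≤
        Bf * min p p⁻¹ * |g p (t - τ)| + Bg * min p p⁻¹ * |f p τ| := by
      intro τ hτ
      rw [norm_mul, Real.norm_eq_abs, Real.norm_eq_abs]
      rcases le_total (t / 2) τ with h | h
      · have h1 := hf3 p hp τ ⟨by linarith [ht.1], hτ.2.trans ht.2⟩
        have h2 : |f p τ| * |g p (t - τ)| ≤ Bf * min p p⁻¹ * |g p (t - τ)| := by gcongr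
        have h3 : 0 ≤ Bg * min p p⁻¹ * |f p τ| := by positivity
        linarith
      · have h1 := hg3 p hp (t - τ) ⟨by linarith [ht.1], by linarith [ht.2, hτ.1]⟩
        have h2 : |f p τ| * |g p (t - τ)| ≤ |f p τ| * (Bg * min p p⁻¹) := by gcongr
        have h3 : 0 ≤ Bf * min p p⁻¹ * |g p (t - τ)| := by positivity
        linarith
    rw [_root_.laplaceConv, intervalIntegral.integral_of_le ht0.le, ← Real.norm_eq_abs]
    calc ‖∫ τ in Ioc 0 t, f p τ * g p (t - τ)‖
        ≤ ∫ τ in Ioc 0 t, (Bf * min p p⁻¹ * |g p (t - τ)| + Bg * min p p⁻¹ * |f p τ|) := by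
          refine norm_integral_le_of_norm_le ((hgt'.const_mul _).add (hft.const_mul _)) ?_
          filter_upwards [ae_restrict_mem measurableSet_Ioc] with τ hτ using hpt τ hτ
      _ = Bf * min p p⁻¹ * (∫ τ in Ioc 0 t, |g p τ|) +
            Bg * min p p⁻¹ * ∫ τ in Ioc 0 t, |f p τ| := by
          rw [MeasureTheory.integral_add (hgt'.const_mul _) (hft.const_mul _),
            MeasureTheory.integral_const_mul, MeasureTheory.integral_const_mul, hgI]
      _ ≤ Bf * min p p⁻¹ * (Cg * 1) + Bg * min p p⁻¹ * (Cf * 1) := by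
          gcongr
          · exact (hmono _ hg1.abs).trans (hg2.trans (by gcongr))
          · exact (hmono _ hf1.abs).trans (hf2.trans (by gcongr))
      _ = _ := by ring

theorem IsDensityFamily.iterConv {T : ℝ} (n : ℕ) {h : Fin (n + 1) → ℝ → ℝ → ℝ}
    (hh : ∀ j, IsDensityFamily T (h j)) :
    IsDensityFamily T fun p => iterConv n fun j => h j p := by
  induction n with
  | zero => exact hh 0
  | succ n ih => exact (ih fun j => hh j.castSucc).laplaceConv (hh _)

theorem isDensityFamily_wright {T α l : ℝ} (hT : 0 < T) (hα : α ∈ Ioo (0 : ℝ) 1) (hl : 0 < l) :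
    IsDensityFamily T fun p t => t ^ ((0 : ℝ) - 1) * wrightW α 0 (-(l * p) * t ^ (-α)) := by
  obtain ⟨C, hC, hw⟩ := (exists_wright_bound hα).2
  have hmeas : Measurable (Function.uncurry fun p t : ℝ =>
      t ^ ((0 : ℝ) - 1) * wrightW α 0 (-(l * p) * t ^ (-α))) := by
    have h1 := (measurable_wrightW hα).comp
      (f := fun q : ℝ × ℝ => -(l * q.1) * q.2 ^ (-α)) (by fun_prop)
    have h2 : Measurable fun q : ℝ × ℝ => q.2 ^ ((0 : ℝ) - 1) := by fun_prop
    exact h2.mul h1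
  have hb1 : ∀ p, 0 < p → ∀ t, 0 < t →
      |t ^ ((0 : ℝ) - 1) * wrightW α 0 (-(l * p) * t ^ (-α))| ≤ C * (l * p) * t ^ (-α - 1) := by
    intro p hp t ht
    have h := (hw (l * p * t ^ (-α)) (by positivity)).1
    rw [abs_mul, abs_of_pos (rpow_pos_of_pos ht _), neg_mul]
    calc _ ≤ t ^ ((0 : ℝ) - 1) * (C * (l * p * t ^ (-α))) := by gcongr
      _ = C * (l * p) * (t ^ (-α) * t ^ ((0 : ℝ) - 1)) := by ring
      _ = _ := by rw [← rpow_add ht]; ring_nf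
  have hb2 : ∀ p, 0 < p → ∀ t, 0 < t →
      |t ^ ((0 : ℝ) - 1) * wrightW α 0 (-(l * p) * t ^ (-α))| ≤ C * (l * p)⁻¹ * t ^ (α - 1) := by
    intro p hp t ht
    have h := (hw (l * p * t ^ (-α)) (by positivity)).2
    rw [abs_mul, abs_of_pos (rpow_pos_of_pos ht _), neg_mul]
    calc _ ≤ t ^ ((0 : ℝ) - 1) * (C * (l * p * t ^ (-α))⁻¹) := by gcongr
      _ = C * (l * p)⁻¹ * (t ^ α * t ^ ((0 : ℝ) - 1)) := by
        rw [mul_inv, rpow_neg ht.le, inv_inv]; ring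
      _ = _ := by rw [← rpow_add ht]; ring_nf
  have hpow : ∀ b, 0 < b → IntegrableOn (fun t : ℝ => t ^ (α - 1)) (Ioc 0 b) ∧
      ∫ t in Ioc 0 b, t ^ (α - 1) = b ^ α / α := by
    intro b hb
    constructor
    · exact (intervalIntegrable_iff_integrableOn_Ioc_of_le hb.le).1
        (intervalIntegrable_rpow' (by linarith [hα.1]))
    · rw [← intervalIntegral.integral_of_le hb.le, integral_rpow (Or.inl (by linarith [hα.1])),
        sub_add_cancel, zero_rpow hα.1.ne', sub_zero]
  have hα0 := hα.1
  refine ⟨hmeas, ⟨2 * C / α + C * l⁻¹ * (T ^ α / α), by positivity, fun p hp => ?_⟩, fun ε hε => ?_⟩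
  · set h : ℝ → ℝ := fun t => t ^ ((0 : ℝ) - 1) * wrightW α 0 (-(l * p) * t ^ (-α)) with hdef
    have hlp : 0 < l * p := by positivity
    have hms : ∀ s, AEStronglyMeasurable h (volume.restrict s) := fun s =>
      (hmeas.comp (f := fun t => (p, t)) (by fun_prop)).aestronglyMeasurable
    have hnear : ∀ b, 0 < b → IntegrableOn h (Ioc 0 b) ∧
        ∫ t in Ioc 0 b, |h t| ≤ C * (l * p)⁻¹ * (b ^ α / α) := by
      intro b hb
      have hi : IntegrableOn h (Ioc 0 b) := by
        refine ((hpow b hb).1.const_mul (C * (l * p)⁻¹)).mono' (hms _) ?_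
        filter_upwards [ae_restrict_mem measurableSet_Ioc] with t ht using hb2 p hp t ht.1
      refine ⟨hi, ?_⟩
      rw [← (hpow b hb).2, ← MeasureTheory.integral_const_mul]
      exact setIntegral_mono_on hi.abs ((hpow b hb).1.const_mul _) measurableSet_Ioc
        fun t ht => hb2 p hp t ht.1
    have hfar : ∀ b, 0 < b → IntegrableOn h (Ioi b) ∧
        ∫ t in Ioi b, |h t| ≤ C * (l * p) * (b ^ (-α) / α) := by
      intro b hb
      have hp1 : IntegrableOn (fun t : ℝ => t ^ (-α - 1)) (Ioi b) :=
        integrableOn_Ioi_rpow_of_lt (by linarith) hb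
      have hp2 : ∫ t in Ioi b, t ^ (-α - 1) = b ^ (-α) / α := by
        rw [integral_Ioi_rpow_of_lt (by linarith) hb, sub_add_cancel, neg_div_neg_eq]
      have hi : IntegrableOn h (Ioi b) := by
        refine (hp1.const_mul (C * (l * p))).mono' (hms _) ?_
        filter_upwards [ae_restrict_mem measurableSet_Ioi] with t ht
        exact hb1 p hp t (hb.trans ht)
      refine ⟨hi, ?_⟩
      rw [← hp2, ← MeasureTheory.integral_const_mul]
      exact setIntegral_mono_on hi.abs (hp1.const_mul _) measurableSet_Ioi
        fun t ht => hb1 p hp t (hb.trans ht)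
    refine ⟨(hnear T hT).1, ?_⟩
    rw [mul_min_of_nonneg _ _ (by positivity)]
    refine le_min ?_ ?_
    · set b : ℝ := (l * p) ^ (α⁻¹) with hbdef
      have hb : 0 < b := rpow_pos_of_pos hlp _
      have hbα : b ^ α = l * p := by
        rw [hbdef, ← rpow_mul hlp.le, inv_mul_cancel₀ hα0.ne', rpow_one]
      have hall : IntegrableOn h (Ioi 0) := by
        rw [← Ioc_union_Ioi_eq_Ioi hb.le]
        exact (hnear b hb).1.union (hfar b hb).1
      calc ∫ t in Ioc 0 T, |h t| ≤ ∫ t in Ioi 0, |h t| :=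
            setIntegral_mono_set hall.abs (Eventually.of_forall fun _ => abs_nonneg _)
              (LE.le.eventuallyLE Ioc_subset_Ioi_self)
        _ = (∫ t in Ioc 0 b, |h t|) + ∫ t in Ioi b, |h t| := by
          rw [← Ioc_union_Ioi_eq_Ioi hb.le]
          exact setIntegral_union (Ioc_disjoint_Ioi le_rfl) measurableSet_Ioi
            (hnear b hb).1.abs (hfar b hb).1.abs
        _ ≤ C * (l * p)⁻¹ * (b ^ α / α) + C * (l * p) * (b ^ (-α) / α) :=
          add_le_add (hnear b hb).2 (hfar b hb).2
        _ = 2 * C / α := by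
          rw [rpow_neg hb.le, hbα]
          field_simp
          ring
        _ ≤ _ := by rw [mul_one]; exact le_add_of_nonneg_right (by positivity)
    · calc _ ≤ C * (l * p)⁻¹ * (T ^ α / α) := (hnear T hT).2
        _ = C * l⁻¹ * (T ^ α / α) * p⁻¹ := by rw [mul_inv]; ring
        _ ≤ _ := by gcongr; exact le_add_of_nonneg_left (by positivity)
  · refine ⟨C * l * ε ^ (-α - 1) + C * l⁻¹ * ε ^ (α - 1), by positivity, fun p hp t ht => ?_⟩
    have ht0 : 0 < t := hε.trans_le ht.1
    have h1 := hb1 p hp t ht0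
    have h2 := hb2 p hp t ht0
    have h3 : t ^ (-α - 1) ≤ ε ^ (-α - 1) :=
      rpow_le_rpow_of_nonpos hε ht.1 (by linarith)
    have h4 : t ^ (α - 1) ≤ ε ^ (α - 1) :=
      rpow_le_rpow_of_nonpos hε ht.1 (by linarith [hα.2])
    rw [mul_min_of_nonneg _ _ (by positivity)]
    refine le_min ?_ ?_
    · calc _ ≤ C * (l * p) * ε ^ (-α - 1) := h1.trans (by gcongr)
        _ = C * l * ε ^ (-α - 1) * p := by ring
        _ ≤ _ := by gcongr; exact le_add_of_nonneg_right (by positivity)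
    · calc _ ≤ C * (l * p)⁻¹ * ε ^ (α - 1) := h2.trans (by gcongr)
        _ = C * l⁻¹ * ε ^ (α - 1) * p⁻¹ := by rw [mul_inv]; ring
        _ ≤ _ := by gcongr; exact le_add_of_nonneg_left (by positivity)

theorem isDensityFamily_Sconv {T : ℝ} (hT : 0 < T) {m : ℕ} {α lam : Fin (m + 1) → ℝ}
    (hα : ∀ j, α j ∈ Ioo (0 : ℝ) 1) (hlam : ∀ j, 0 < lam j) :
    IsDensityFamily T fun p => Sconv m 0 α fun j => lam j * p := by
  have := IsDensityFamily.iterConv m fun j => isDensityFamily_wright hT (hα j) (hlam j)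
  simpa only [Sconv, ite_self] using this

/-- The heat-type potential of the family `f`, the kernel `E` up to a constant factor. -/
noncomputable def gaussPot (f : ℝ → ℝ → ℝ) (x t : ℝ) : ℝ :=
  ∫ p in Ioi (0 : ℝ), p ^ (-(1/2 : ℝ)) * Real.exp (-(|x| ^ 2) / (4 * p)) * f p t

/-- The formal spatial derivative of `gaussPot f`. -/
noncomputable def gaussPotDeriv (f : ℝ → ℝ → ℝ) (x t : ℝ) : ℝ :=
  ∫ p in Ioi (0 : ℝ),
    p ^ (-(1/2 : ℝ)) * (Real.exp (-(|x| ^ 2) / (4 * p)) * (-(2 * x) / (4 * p))) * f p t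

theorem gauss_le_one (x : ℝ) {p : ℝ} (hp : 0 < p) : Real.exp (-(|x| ^ 2) / (4 * p)) ≤ 1 := by
  rw [Real.exp_le_one_iff, neg_div]
  exact neg_nonpos.2 (by positivity)

theorem abs_gauss_deriv (x : ℝ) {p : ℝ} (hp : 0 < p) :
    |Real.exp (-(|x| ^ 2) / (4 * p)) * (-(2 * x) / (4 * p))| =
      Real.exp (-(|x| ^ 2) / (4 * p)) * (|x| / (2 * p)) := by
  rw [abs_mul, abs_of_pos (Real.exp_pos _), abs_div, abs_neg, abs_mul, abs_two,
    abs_of_pos (by positivity : 0 < 4 * p)]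
  congr 1
  field_simp
  ring

theorem exp_neg_le_inv {v : ℝ} (hv : 0 ≤ v) : Real.exp (-v) ≤ (1 + v)⁻¹ := by
  rw [Real.exp_neg]
  gcongr
  linarith [Real.add_one_le_exp v]

theorem rpow_mul_abs_gauss_deriv_le (x : ℝ) {p : ℝ} (hp : 0 < p) :
    p ^ (-(1/2 : ℝ)) * |Real.exp (-(|x| ^ 2) / (4 * p)) * (-(2 * x) / (4 * p))| ≤ p⁻¹ := by
  rw [abs_gauss_deriv x hp]
  set q : ℝ := p ^ (1/2 : ℝ) with hq
  have hq0 : 0 < q := rpow_pos_of_pos hp _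
  have hqq : p = q ^ 2 := by
    rw [hq, ← rpow_natCast, ← rpow_mul hp.le]; norm_num
  have h1 : p ^ (-(1/2 : ℝ)) = q⁻¹ := by rw [rpow_neg hp.le]
  have h2 := exp_neg_le_inv (show 0 ≤ |x| ^ 2 / (4 * p) by positivity)
  rw [← neg_div] at h2
  rw [h1]
  calc _ ≤ q⁻¹ * ((1 + |x| ^ 2 / (4 * p))⁻¹ * (|x| / (2 * p))) := by gcongr
    _ ≤ p⁻¹ := by
      rw [hqq]
      field_simp
      nlinarith [sq_nonneg (2 * q - |x|)]

theorem abs_gauss_deriv_le {x δ p : ℝ} (hδ : 0 < δ) (hx : δ ≤ |x|) (hp : 0 < p) :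
    |Real.exp (-(|x| ^ 2) / (4 * p)) * (-(2 * x) / (4 * p))| ≤ 2 / δ := by
  rw [abs_gauss_deriv x hp]
  have hx0 : 0 < |x| := hδ.trans_le hx
  have h2 := exp_neg_le_inv (show 0 ≤ |x| ^ 2 / (4 * p) by positivity)
  rw [← neg_div] at h2
  have h3 : (1 + |x| ^ 2 / (4 * p))⁻¹ ≤ (|x| ^ 2 / (4 * p))⁻¹ := by
    gcongr
    linarith
  calc _ ≤ (|x| ^ 2 / (4 * p))⁻¹ * (|x| / (2 * p)) := by gcongr; exact h2.trans h3
    _ = 2 / |x| := by field_simp; ring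
    _ ≤ _ := by gcongr

theorem integrableOn_weight : IntegrableOn (fun p : ℝ => p ^ (-(1/2 : ℝ)) * min 1 p⁻¹) (Ioi 0) := by
  rw [← Ioc_union_Ioi_eq_Ioi zero_le_one]
  refine IntegrableOn.union ?_ ?_
  · have h : IntegrableOn (fun p : ℝ => p ^ (-(1/2 : ℝ))) (Ioc 0 1) :=
      (intervalIntegrable_iff_integrableOn_Ioc_of_le zero_le_one).1
        (intervalIntegrable_rpow' (by norm_num))
    refine h.mono' (by fun_prop) ?_
    filter_upwards [ae_restrict_mem measurableSet_Ioc] with p hp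
    have hp0 : 0 < p := hp.1
    rw [Real.norm_of_nonneg (by positivity)]
    exact mul_le_of_le_one_right (by positivity) (min_le_left _ _)
  · have h : IntegrableOn (fun p : ℝ => p ^ (-(3/2 : ℝ))) (Ioi 1) :=
      integrableOn_Ioi_rpow_of_lt (by norm_num) one_pos
    refine h.mono' (by fun_prop) ?_
    filter_upwards [ae_restrict_mem measurableSet_Ioi] with p hp
    have hp0 : 0 < p := one_pos.trans hp
    rw [Real.norm_of_nonneg (by positivity)]
    calc _ ≤ p ^ (-(1/2 : ℝ)) * p⁻¹ := by gcongr; exact min_le_right _ _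
      _ = _ := by rw [← rpow_neg_one, ← rpow_add hp0]; norm_num

theorem min_self_inv_le (p : ℝ) : min p p⁻¹ ≤ min 1 p⁻¹ := by
  refine le_min ?_ (min_le_right _ _)
  rcases le_total p 1 with h | h
  · exact (min_le_left _ _).trans h
  · exact (min_le_right _ _).trans (inv_le_one_of_one_le₀ h)

theorem inv_mul_min_le {p : ℝ} (hp : 0 < p) :
    p⁻¹ * min p p⁻¹ ≤ p ^ (-(1/2 : ℝ)) * min 1 p⁻¹ := by
  rcases le_total p 1 with h | h
  · have h1 : 1 ≤ p⁻¹ := (one_le_inv₀ hp).2 h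
    rw [min_eq_left (h.trans h1), min_eq_left h1, inv_mul_cancel₀ hp.ne', mul_one]
    exact one_le_rpow_of_pos_of_le_one_of_nonpos hp h (by norm_num)
  · have h1 : p⁻¹ ≤ 1 := inv_le_one_of_one_le₀ h
    rw [min_eq_right (h1.trans h), min_eq_right h1]
    gcongr
    rw [← rpow_neg_one]
    exact rpow_le_rpow_of_exponent_le h (by norm_num)

theorem IsDensityFamily.measurable_left {T : ℝ} {f : ℝ → ℝ → ℝ}
    (hf : IsDensityFamily T f) (t : ℝ) :
    Measurable fun p => f p t :=
  hf.meas.comp (f := fun p => (p, t)) (by fun_prop)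

theorem IsDensityFamily.exists_weighted_le {T : ℝ} {f : ℝ → ℝ → ℝ}
    (hf : IsDensityFamily T f) {ε : ℝ} (hε : 0 < ε) :
    ∃ C : ℝ, 0 ≤ C ∧ ∀ t ∈ Icc ε T, ∀ p, 0 < p →
      p ^ (-(1/2 : ℝ)) * |f p t| ≤ C * (p ^ (-(1/2 : ℝ)) * min 1 p⁻¹) ∧
      p⁻¹ * |f p t| ≤ C * (p ^ (-(1/2 : ℝ)) * min 1 p⁻¹) := by
  obtain ⟨C, hC, h⟩ := hf.abs_le ε hε
  refine ⟨C, hC, fun t ht p hp => ⟨?_, ?_⟩⟩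
  · calc _ ≤ p ^ (-(1/2 : ℝ)) * (C * min p p⁻¹) := by gcongr; exact h p hp t ht
      _ ≤ p ^ (-(1/2 : ℝ)) * (C * min 1 p⁻¹) := by
        gcongr ?_ * (C * ?_)
        exact min_self_inv_le p
      _ = _ := by ring
  · calc _ ≤ p⁻¹ * (C * min p p⁻¹) := by gcongr; exact h p hp t ht
      _ = C * (p⁻¹ * min p p⁻¹) := by ring
      _ ≤ _ := by gcongr ?_ * ?_; exact inv_mul_min_le hp

/-- The weighted mass of `f · t`, which dominates `gaussPot f` and, away from `x = 0`, its spatial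
derivative. -/
noncomputable def weightedMass (f : ℝ → ℝ → ℝ) (t : ℝ) : ℝ :=
  ∫ p in Ioi (0 : ℝ), p ^ (-(1/2 : ℝ)) * |f p t|

theorem weightedMass_nonneg (f : ℝ → ℝ → ℝ) (t : ℝ) : 0 ≤ weightedMass f t :=
  setIntegral_nonneg measurableSet_Ioi fun _ hp =>
    mul_nonneg (rpow_nonneg (le_of_lt hp) _) (abs_nonneg _)

theorem IsDensityFamily.integrableOn_weighted {T : ℝ} {f : ℝ → ℝ → ℝ}
    (hf : IsDensityFamily T f) {t : ℝ}
    (ht : t ∈ Ioc 0 T) :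
    IntegrableOn (fun p => p ^ (-(1/2 : ℝ)) * |f p t|) (Ioi 0) ∧
      IntegrableOn (fun p => p⁻¹ * |f p t|) (Ioi 0) := by
  obtain ⟨C, hC, h⟩ := hf.exists_weighted_le ht.1
  have hm := hf.measurable_left t
  constructor <;>
  · refine (integrableOn_weight.const_mul C).mono' (by fun_prop) ?_
    filter_upwards [ae_restrict_mem measurableSet_Ioi] with p hp
    have hp : 0 < p := hp
    rw [Real.norm_of_nonneg (by positivity)]
    first
    | exact (h t ⟨le_rfl, ht.2⟩ p hp).1
    | exact (h t ⟨le_rfl, ht.2⟩ p hp).2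

theorem IsDensityFamily.weightedMass_le {T : ℝ} {f : ℝ → ℝ → ℝ}
    (hf : IsDensityFamily T f) {ε : ℝ} (hε : 0 < ε) :
    ∃ C : ℝ, 0 ≤ C ∧ ∀ t ∈ Icc ε T, weightedMass f t ≤ C := by
  obtain ⟨C, hC, h⟩ := hf.exists_weighted_le hε
  refine ⟨∫ p in Ioi (0 : ℝ), C * (p ^ (-(1/2 : ℝ)) * min 1 p⁻¹),
    setIntegral_nonneg measurableSet_Ioi fun p hp => ?_, fun t ht => ?_⟩
  · have hp : 0 < p := hp
    positivity
  · exact setIntegral_mono_on (hf.integrableOn_weighted ⟨hε.trans_le ht.1, ht.2⟩).1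
      (integrableOn_weight.const_mul C) measurableSet_Ioi fun p hp => (h t ht p hp).1

theorem IsDensityFamily.integrableOn_weightedMass {T : ℝ} {f : ℝ → ℝ → ℝ}
    (hf : IsDensityFamily T f) :
    IntegrableOn (weightedMass f) (Ioc 0 T) := by
  obtain ⟨C, hC, h⟩ := hf.integral_le
  have hm : Measurable fun q : ℝ × ℝ => q.2 ^ (-(1/2 : ℝ)) * |f q.2 q.1| := by
    have := (hf.meas.comp measurable_swap).abs
    have h2 : Measurable fun q : ℝ × ℝ => q.2 ^ (-(1/2 : ℝ)) := by fun_prop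
    exact h2.mul this
  have hprod : Integrable (fun q : ℝ × ℝ => q.2 ^ (-(1/2 : ℝ)) * |f q.2 q.1|)
      ((volume.restrict (Ioc 0 T)).prod (volume.restrict (Ioi 0))) := by
    rw [integrable_prod_iff' hm.aestronglyMeasurable]
    refine ⟨?_, ?_⟩
    · filter_upwards [ae_restrict_mem measurableSet_Ioi] with p hp
      exact (h p hp).1.abs.const_mul _
    · refine (integrableOn_weight.const_mul C).mono' ?_ ?_
      · exact (hm.norm.comp measurable_swap).stronglyMeasurable.integral_prod_right'
          |>.aestronglyMeasurable
      · filter_upwards [ae_restrict_mem measurableSet_Ioi] with p hp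
        have hp : 0 < p := hp
        rw [Real.norm_of_nonneg (integral_nonneg fun _ => norm_nonneg _)]
        have heq : ∀ t, ‖p ^ (-(1/2 : ℝ)) * |f p t|‖ = p ^ (-(1/2 : ℝ)) * |f p t| := fun t =>
          Real.norm_of_nonneg (by positivity)
        simp only [heq]
        rw [MeasureTheory.integral_const_mul]
        calc _ ≤ p ^ (-(1/2 : ℝ)) * (C * min 1 p⁻¹) := by gcongr; exact (h p hp).2
          _ = _ := by ring
  exact hprod.integral_prod_left

theorem IsDensityFamily.abs_gaussPot_le {T : ℝ} {f : ℝ → ℝ → ℝ}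
    (hf : IsDensityFamily T f) {t : ℝ} (ht : t ∈ Ioc 0 T)
    (x : ℝ) : |gaussPot f x t| ≤ weightedMass f t := by
  rw [← Real.norm_eq_abs, gaussPot, weightedMass]
  refine norm_integral_le_of_norm_le (hf.integrableOn_weighted ht).1 ?_
  filter_upwards [ae_restrict_mem measurableSet_Ioi] with p hp
  have hp : 0 < p := hp
  rw [norm_mul, Real.norm_of_nonneg (by positivity), Real.norm_eq_abs]
  gcongr
  exact mul_le_of_le_one_right (by positivity) (gauss_le_one x hp)

theorem IsDensityFamily.abs_gaussPotDeriv_le {T : ℝ} {f : ℝ → ℝ → ℝ}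
    (hf : IsDensityFamily T f) {t x δ : ℝ}
    (ht : t ∈ Ioc 0 T) (hδ : 0 < δ) (hx : δ ≤ |x|) :
    |gaussPotDeriv f x t| ≤ 2 / δ * weightedMass f t := by
  rw [← Real.norm_eq_abs, gaussPotDeriv, weightedMass, ← MeasureTheory.integral_const_mul]
  refine norm_integral_le_of_norm_le ((hf.integrableOn_weighted ht).1.const_mul _) ?_
  filter_upwards [ae_restrict_mem measurableSet_Ioi] with p hp
  have hp : 0 < p := hp
  rw [norm_mul, norm_mul, Real.norm_of_nonneg (rpow_nonneg hp.le _), Real.norm_eq_abs,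
    Real.norm_eq_abs]
  calc _ ≤ p ^ (-(1/2 : ℝ)) * (2 / δ) * |f p t| := by gcongr; exact abs_gauss_deriv_le hδ hx hp
    _ = _ := by ring

theorem norm_gaussPotDeriv_integrand_le (f : ℝ → ℝ → ℝ) (x t : ℝ) {p : ℝ} (hp : 0 < p) :
    ‖p ^ (-(1/2 : ℝ)) * (Real.exp (-(|x| ^ 2) / (4 * p)) * (-(2 * x) / (4 * p))) * f p t‖ ≤
      p⁻¹ * |f p t| := by
  rw [norm_mul, norm_mul, Real.norm_of_nonneg (rpow_nonneg hp.le _), Real.norm_eq_abs,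
    Real.norm_eq_abs]
  gcongr
  exact rpow_mul_abs_gauss_deriv_le x hp

theorem IsDensityFamily.gaussPotDeriv_bounded {T : ℝ} {f : ℝ → ℝ → ℝ}
    (hf : IsDensityFamily T f) {ε : ℝ} (hε : 0 < ε) :
    ∃ C : ℝ, 0 ≤ C ∧ ∀ t ∈ Icc ε T, ∀ x, |gaussPotDeriv f x t| ≤ C := by
  obtain ⟨C, hC, h⟩ := hf.exists_weighted_le hε
  refine ⟨∫ p in Ioi (0 : ℝ), C * (p ^ (-(1/2 : ℝ)) * min 1 p⁻¹),
    setIntegral_nonneg measurableSet_Ioi fun p hp => ?_, fun t ht x => ?_⟩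
  · have hp : 0 < p := hp
    positivity
  · rw [← Real.norm_eq_abs, gaussPotDeriv]
    refine norm_integral_le_of_norm_le (integrableOn_weight.const_mul C) ?_
    filter_upwards [ae_restrict_mem measurableSet_Ioi] with p hp
    exact (norm_gaussPotDeriv_integrand_le f x t hp).trans (h t ht p hp).2

theorem IsDensityFamily.hasDerivAt_gaussPot {T : ℝ} {f : ℝ → ℝ → ℝ}
    (hf : IsDensityFamily T f) {t : ℝ} (ht : t ∈ Ioc 0 T)
    (x : ℝ) : HasDerivAt (fun y => gaussPot f y t) (gaussPotDeriv f x t) x := by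
  have hm := hf.measurable_left t
  refine (hasDerivAt_integral_of_dominated_loc_of_deriv_le
    (F := fun y p => p ^ (-(1/2 : ℝ)) * Real.exp (-(|y| ^ 2) / (4 * p)) * f p t)
    (F' := fun y p =>
      p ^ (-(1/2 : ℝ)) * (Real.exp (-(|y| ^ 2) / (4 * p)) * (-(2 * y) / (4 * p))) * f p t)
    (bound := fun p => p⁻¹ * |f p t|) (s := univ) univ_mem
    (Eventually.of_forall fun y => by fun_prop) ?_ (by fun_prop) ?_
    (hf.integrableOn_weighted ht).2 ?_).2
  · refine (hf.integrableOn_weighted ht).1.mono' (by fun_prop) ?_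
    filter_upwards [ae_restrict_mem measurableSet_Ioi] with p hp
    have hp : 0 < p := hp
    rw [norm_mul, Real.norm_of_nonneg (by positivity), Real.norm_eq_abs]
    gcongr
    exact mul_le_of_le_one_right (by positivity) (gauss_le_one x hp)
  · filter_upwards [ae_restrict_mem measurableSet_Ioi] with p hp y _
    exact norm_gaussPotDeriv_integrand_le f y t hp
  · refine Eventually.of_forall fun p y _ => ?_
    refine HasDerivAt.mul_const (HasDerivAt.const_mul _ ?_) _
    simp only [sq_abs]
    have h := (((hasDerivAt_id y).pow 2).neg.div_const (4 * p)).exp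
    simpa using h

theorem IsDensityFamily.measurable_gaussPot {T : ℝ} {f : ℝ → ℝ → ℝ}
    (hf : IsDensityFamily T f) :
    Measurable (Function.uncurry (gaussPot f)) := by
  have hm : Measurable fun q : (ℝ × ℝ) × ℝ =>
      q.2 ^ (-(1/2 : ℝ)) * Real.exp (-(|q.1.1| ^ 2) / (4 * q.2)) * f q.2 q.1.2 := by
    have h1 := hf.meas.comp (f := fun q : (ℝ × ℝ) × ℝ => (q.2, q.1.2)) (by fun_prop)
    exact Measurable.mul (by fun_prop) h1
  exact (hm.stronglyMeasurable.integral_prod_right' (ν := volume.restrict (Ioi 0))).measurable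

theorem IsDensityFamily.measurable_gaussPotDeriv {T : ℝ} {f : ℝ → ℝ → ℝ}
    (hf : IsDensityFamily T f) :
    Measurable (Function.uncurry (gaussPotDeriv f)) := by
  have hm : Measurable fun q : (ℝ × ℝ) × ℝ =>
      q.2 ^ (-(1/2 : ℝ)) *
        (Real.exp (-(|q.1.1| ^ 2) / (4 * q.2)) * (-(2 * q.1.1) / (4 * q.2))) * f q.2 q.1.2 := by
    have h1 := hf.meas.comp (f := fun q : (ℝ × ℝ) × ℝ => (q.2, q.1.2)) (by fun_prop)
    exact Measurable.mul (by fun_prop) h1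
  exact (hm.stronglyMeasurable.integral_prod_right' (ν := volume.restrict (Ioi 0))).measurable

theorem IsDensityFamily.hasDerivAt_integral_gaussPot {T : ℝ} {f : ℝ → ℝ → ℝ}
    (hf : IsDensityFamily T f) {t : ℝ} (ht : t ∈ Ioc 0 T) {s φ : ℝ → ℝ} (hs : Continuous s)
    (hφm : Measurable φ) (hφ : IntegrableOn φ (Ioc 0 t)) {M : ℝ}
    (hM : ∀ τ ∈ Icc (t / 2) t, |φ τ| ≤ M) {x : ℝ} (hx : x ≠ s t) :
    HasDerivAt (fun y => ∫ τ in (0 : ℝ)..t, φ τ * gaussPot f (y - s τ) (t - τ))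
      (∫ τ in (0 : ℝ)..t, φ τ * gaussPotDeriv f (x - s τ) (t - τ)) x := by
  have ht0 : 0 < t := ht.1
  have hd : 0 < |x - s t| := abs_pos.2 (sub_ne_zero.2 hx)
  obtain ⟨δ, hδ, hδd⟩ : ∃ δ, 0 < δ ∧ 3 * δ = |x - s t| := ⟨|x - s t| / 3, by positivity, by ring⟩
  obtain ⟨η, hη, hsη⟩ := Metric.continuousAt_iff.1 (hs.continuousAt (x := t)) δ hδ
  obtain ⟨ε, hε, hεη, hεt⟩ : ∃ ε, 0 < ε ∧ ε ≤ η ∧ ε ≤ t / 2 :=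
    ⟨min η (t / 2), lt_min hη (half_pos ht0), min_le_left _ _, min_le_right _ _⟩
  have hM0 : 0 ≤ M := (abs_nonneg _).trans (hM t ⟨by linarith, le_rfl⟩)
  have hfar : ∀ y ∈ Metric.ball x δ, ∀ τ, τ < t → t - τ < ε → δ ≤ |y - s τ| := by
    intro y hy τ hτ hτε
    have h1 : |y - x| < δ := by simpa [Real.dist_eq] using hy
    have h2 : |s τ - s t| < δ := by
      have := hsη (x := τ) (by rw [Real.dist_eq, abs_sub_comm, abs_of_pos (by linarith)]; linarith)
      rwa [Real.dist_eq] at this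
    have h3 : |x - s t| ≤ |y - s τ| + |y - x| + |s τ - s t| := by
      calc |x - s t| = |(y - s τ) - (y - x) + (s τ - s t)| := by ring_nf
        _ ≤ _ := (abs_add_le _ _).trans (by gcongr; exact abs_sub _ _)
    linarith
  obtain ⟨C, hC, hCw⟩ := hf.weightedMass_le hε
  obtain ⟨D, hD, hDb⟩ := hf.gaussPotDeriv_bounded hε
  have hφi : IntervalIntegrable φ volume 0 t :=
    (intervalIntegrable_iff_integrableOn_Ioc_of_le ht0.le).2 hφ
  have hwi : IntervalIntegrable (fun τ => weightedMass f (t - τ)) volume 0 t := by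
    have h : IntervalIntegrable (weightedMass f) volume 0 t :=
      (intervalIntegrable_iff_integrableOn_Ioc_of_le ht0.le).2
        (hf.integrableOn_weightedMass.mono_set (Ioc_subset_Ioc_right ht.2))
    simpa using (h.comp_sub_left t).symm
  have hne : ∀ᵐ τ : ℝ, τ ≠ t := by simp [ae_iff]
  have hbound : ∀ A B : ℝ, IntervalIntegrable
      (fun τ => A * |φ τ| + M * (B * weightedMass f (t - τ))) volume 0 t := fun A B =>
    (hφi.abs.const_mul A).add ((hwi.const_mul B).const_mul M)
  have hle : ∀ A B, 0 ≤ A → 0 ≤ B → ∀ τ ∈ Ioc 0 t, τ ≠ t → ∀ g : ℝ,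
      (ε ≤ t - τ → |g| ≤ A) → (t - τ < ε → |g| ≤ B * weightedMass f (t - τ)) →
      ‖φ τ * g‖ ≤ A * |φ τ| + M * (B * weightedMass f (t - τ)) := by
    intro A B hA hB τ hτ hτt g h1 h2
    have hw := weightedMass_nonneg f (t - τ)
    rw [norm_mul, Real.norm_eq_abs, Real.norm_eq_abs]
    rcases le_or_gt ε (t - τ) with h | h
    · calc |φ τ| * |g| ≤ |φ τ| * A := by gcongr; exact h1 h
        _ = A * |φ τ| := mul_comm _ _
        _ ≤ _ := le_add_of_nonneg_right (by positivity)
    · calc |φ τ| * |g| ≤ M * (B * weightedMass f (t - τ)) := by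
            gcongr
            · exact hM τ ⟨by linarith, hτ.2⟩
            · exact h2 h
        _ ≤ _ := le_add_of_nonneg_left (by positivity)
  have hmem : ∀ τ ∈ Ioc 0 t, τ ≠ t → t - τ ∈ Ioc 0 T := fun τ hτ hτt =>
    ⟨sub_pos.2 (lt_of_le_of_ne hτ.2 hτt), by linarith [hτ.1, ht.2]⟩
  have hmeas : ∀ g : ℝ → ℝ → ℝ, Measurable (Function.uncurry g) → ∀ y,
      Measurable fun τ => φ τ * g (y - s τ) (t - τ) := fun g hg y =>
    hφm.mul (hg.comp (f := fun τ => (y - s τ, t - τ))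
      ((measurable_const.sub hs.measurable).prodMk (measurable_const.sub measurable_id)))
  have hmeas₁ := hmeas _ hf.measurable_gaussPot
  have hmeas₂ := hmeas _ hf.measurable_gaussPotDeriv
  refine (intervalIntegral.hasDerivAt_integral_of_dominated_loc_of_deriv_le
    (F := fun y τ => φ τ * gaussPot f (y - s τ) (t - τ))
    (F' := fun y τ => φ τ * gaussPotDeriv f (y - s τ) (t - τ))
    (bound := fun τ => D * |φ τ| + M * (2 / δ * weightedMass f (t - τ)))
    (Metric.ball_mem_nhds x hδ)
    (Eventually.of_forall fun y => (hmeas₁ y).aestronglyMeasurable) ?_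
    (hmeas₂ x).aestronglyMeasurable ?_ (hbound _ _) ?_).2
  · refine (hbound C 1).mono_fun' (hmeas₁ x).aestronglyMeasurable ?_
    rw [uIoc_of_le ht0.le]
    filter_upwards [ae_restrict_mem measurableSet_Ioc, ae_restrict_of_ae hne] with τ hτ hτt
    have hG := hf.abs_gaussPot_le (hmem τ hτ hτt) (x - s τ)
    exact hle C 1 hC zero_le_one τ hτ hτt _
      (fun h => hG.trans (hCw _ ⟨h, (hmem τ hτ hτt).2⟩)) fun _ => by rwa [one_mul]
  · rw [uIoc_of_le ht0.le]
    filter_upwards [hne] with τ hτt hτ y hy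
    exact hle D (2 / δ) hD (by positivity) τ hτ hτt _
      (fun h => hDb _ ⟨h, (hmem τ hτ hτt).2⟩ _) fun h =>
        hf.abs_gaussPotDeriv_le (hmem τ hτ hτt) hδ (hfar y hy τ (sub_pos.1 (hmem τ hτ hτt).1) h)
  · rw [uIoc_of_le ht0.le]
    filter_upwards [hne] with τ hτt hτ y _
    exact ((hf.hasDerivAt_gaussPot (hmem τ hτ hτt) (y - s τ)).comp_sub_const y (s τ)).const_mul _

theorem kerEx_eq_gaussPotDeriv {m : ℕ} {α lam : Fin (m + 1) → ℝ} {T : ℝ}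
    (hS : IsDensityFamily T fun p => Sconv m 0 α fun j => lam j * p) {t : ℝ} (ht : t ∈ Ioc 0 T)
    (x : ℝ) :
    kerEx m α lam x t = (4 * π) ^ (-(1/2 : ℝ)) *
      gaussPotDeriv (fun p => Sconv m 0 α fun j => lam j * p) x t :=
  ((hS.hasDerivAt_gaussPot ht x).const_mul _).deriv

theorem continuousOn_of_abs_sub_le_rpow {s : ℝ → ℝ} {A : Set ℝ} {β : ℝ} (hβ : 0 < β)
    (hs : ∀ t ∈ A, ∀ τ ∈ A, |s t - s τ| ≤ |t - τ| ^ β) : ContinuousOn s A := by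
  intro τ hτ
  rw [ContinuousWithinAt, tendsto_iff_norm_sub_tendsto_zero]
  have h : Tendsto (fun t => |t - τ| ^ β) (𝓝[A] τ) (𝓝 0) := by
    have : Continuous fun t : ℝ => |t - τ| ^ β :=
      Continuous.rpow_const (by fun_prop) fun _ => Or.inr hβ.le
    simpa [hβ.ne'] using (this.tendsto τ).mono_left nhdsWithin_le_nhds
  refine squeeze_zero' (Eventually.of_forall fun _ => norm_nonneg _) ?_ h
  filter_upwards [self_mem_nhdsWithin] with t ht
  exact hs t ht τ hτ

/-- Differentiation under the integral sign for the `E`-potential. -/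
theorem diff_under_integral_E
    (m : ℕ) (α lam : Fin (m + 1) → ℝ)
    (hmono : StrictMono α) (hpos : ∀ j, 0 < α j) (hlt1 : ∀ j, α j < 1)
    (hlam : ∀ j, 0 < lam j)
    (T : ℝ) (hT : 0 < T) (φ s : ℝ → ℝ)
    (hφ : ∃ ψ : ℝ → ℝ, ContinuousOn ψ (Set.Icc 0 T) ∧
      ∀ t ∈ Set.Ioc (0:ℝ) T, ψ t = t ^ (1 - α (Fin.last m)) * φ t)
    (β : ℝ) (hβ : α (Fin.last m) / 2 < β)
    (hs : ∀ t ∈ Set.Icc (0:ℝ) T, ∀ τ ∈ Set.Icc (0:ℝ) T, |s t - s τ| ≤ |t - τ| ^ β)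
    (t : ℝ) (ht : t ∈ Set.Ioc (0:ℝ) T) (x : ℝ) (hx : x ≠ s t) :
    HasDerivAt (fun y => ∫ τ in (0:ℝ)..t, φ τ * kerE m α lam (y - s τ) (t - τ))
      (∫ τ in (0:ℝ)..t, φ τ * kerEx m α lam (x - s τ) (t - τ)) x := by
  have hS := isDensityFamily_Sconv hT (m := m) (fun j => ⟨hpos j, hlt1 j⟩) hlam
  obtain ⟨ψ, hψ, hψφ⟩ := hφ
  set a := α (Fin.last m)
  have ha : 0 < a := hpos _
  have ht0 : 0 < t := ht.1
  have hsc : ContinuousOn s (Icc 0 T) := continuousOn_of_abs_sub_le_rpow (by linarith) hs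
  set s' := IccExtend hT.le ((Icc 0 T).domRestrict s)
  set ψ' := IccExtend hT.le ((Icc 0 T).domRestrict ψ)
  have hs'c : Continuous s' := (continuousOn_iff_continuous_domRestrict.1 hsc).Icc_extend'
  have hψ'c : Continuous ψ' := (continuousOn_iff_continuous_domRestrict.1 hψ).Icc_extend'
  have hs's : ∀ τ ∈ Icc 0 T, s' τ = s τ := fun τ hτ => IccExtend_of_mem _ _ hτ
  have hψ'ψ : ∀ τ ∈ Icc 0 T, ψ' τ = ψ τ := fun τ hτ => IccExtend_of_mem _ _ hτ
  set φ' : ℝ → ℝ := fun τ => τ ^ (a - 1) * ψ' τ with hφ'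
  have hφ'φ : ∀ τ ∈ Ioc 0 t, φ' τ = φ τ := by
    intro τ hτ
    have hτT : τ ∈ Ioc 0 T := ⟨hτ.1, hτ.2.trans ht.2⟩
    simp only [hφ']
    rw [hψ'ψ τ (Ioc_subset_Icc_self hτT), hψφ τ hτT, ← mul_assoc, ← rpow_add hτ.1]
    simp
  have hφ'i : IntegrableOn φ' (Ioc 0 t) := by
    rw [← intervalIntegrable_iff_integrableOn_Ioc_of_le ht0.le]
    exact (intervalIntegrable_rpow' (by linarith)).mul_continuousOn hψ'c.continuousOn
  have hφ'c : ContinuousOn φ' (Icc (t / 2) t) :=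
    (continuousOn_id.rpow_const fun τ hτ => Or.inl (by
      have : t / 2 ≤ τ := hτ.1
      simp only [id]; linarith)).mul hψ'c.continuousOn
  obtain ⟨M, hM⟩ := isCompact_Icc.exists_bound_of_continuousOn hφ'c
  have key := (hS.hasDerivAt_integral_gaussPot ht hs'c (by fun_prop) hφ'i hM
    (x := x) (by rwa [hs's t (Ioc_subset_Icc_self ht)])).const_mul ((4 * π) ^ (-(1/2 : ℝ)))
  have hτT : ∀ τ ∈ Ioc 0 t, τ ∈ Icc 0 T := fun τ hτ => ⟨hτ.1.le, hτ.2.trans ht.2⟩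
  refine (key.congr_of_eventuallyEq (Eventually.of_forall fun y => ?_)).congr_deriv ?_
  · beta_reduce
    rw [← intervalIntegral.integral_const_mul]
    refine intervalIntegral.integral_congr_ae (Eventually.of_forall fun τ hτ => ?_)
    rw [uIoc_of_le ht0.le] at hτ
    rw [hφ'φ τ hτ, hs's τ (hτT τ hτ), mul_left_comm]
    rfl
  · symm
    rw [← intervalIntegral.integral_const_mul]
    have hne : ∀ᵐ τ : ℝ, τ ≠ t := by simp [ae_iff]
    refine intervalIntegral.integral_congr_ae (hne.mono fun τ hτt hτ => ?_)
    rw [uIoc_of_le ht0.le] at hτ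
    rw [hφ'φ τ hτ, hs's τ (hτT τ hτ), mul_left_comm, kerEx_eq_gaussPotDeriv hS
      ⟨sub_pos.2 (lt_of_le_of_ne hτ.2 hτt), by linarith [hτ.1, ht.2]⟩]
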